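/- Let f_1,…,f_n be MRF (submodular dichotomous) valuations on a finite item set M and let σ be a priority order. Then: (i) a σ-Lorenz dominating allocation exists; (ii) any two σ-Lorenz dominating allocations A, A' give every agent the same utility, i.e., f_i(A_i) = f_i(A'_i) for all i (the utility vector of σ-Lorenz dominating allocations is unique); and (iii) every σ-Lorenz dominating allocation is Lorenz dominating with respect to the unperturbed valuations f_1,…,f_n. -/

import Mathlib

open Finset
open scoped Classical

variable {n : ℕ} {I : Type*} [DecidableEq I] [Fintype I]

/-- An allocation assigns pairwise disjoint bundles of items to the agents
(items may remain unallocated). -/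
def IsAllocation (A : Fin n → Finset I) : Prop :=
  ∀ i j : Fin n, i ≠ j → Disjoint (A i) (A j)

/-- The vector of utilities of an allocation under a profile of valuations. -/
def util {α : Type*} (f : Fin n → Finset I → α) (A : Fin n → Finset I) : Fin n → α :=
  fun i => f i (A i)

/-- The entries of the vector `u`, sorted in nondecreasing order. -/
noncomputable def sortedVec {α : Type*} [LinearOrder α] (u : Fin n → α) : List α :=
  (Finset.univ.val.map u).sort (· ≤ ·)

/-- `u` Lorenz-dominates `v`: for each `k`, the sum of the `k` smallest entries of `u`
is at least the sum of the `k` smallest entries of `v`. -/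
def LorenzGE {α : Type*} [LinearOrder α] [AddCommMonoid α] (u v : Fin n → α) : Prop :=
  ∀ k : ℕ, ((sortedVec v).take k).sum ≤ ((sortedVec u).take k).sum

/-- A matroid rank function: a normalized submodular valuation with dichotomous marginals. -/
structure IsMRF (f : Finset I → ℕ) : Prop where
  empty : f ∅ = 0
  submod : ∀ S T : Finset I, S ⊆ T → ∀ a : I,
      f (insert a T) + f S ≤ f (insert a S) + f T
  dichot : ∀ (S : Finset I) (a : I), f (insert a S) = f S ∨ f (insert a S) = f S + 1

/-- Non-redundancy: removing any item from any agent's bundle strictly decreases its value. -/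
def NonRedundant (f : Fin n → Finset I → ℕ) (A : Fin n → Finset I) : Prop :=
  ∀ i : Fin n, ∀ a ∈ A i, f i ((A i).erase a) < f i (A i)

/-- A Lorenz dominating allocation. -/
def LorenzDominating (f : Fin n → Finset I → ℕ) (A : Fin n → Finset I) : Prop :=
  ∀ B : Fin n → Finset I, IsAllocation B → LorenzGE (util f A) (util f B)

/-- The σ-perturbed utilities: agent `i` gets `f i (A i) + σ(i)/n²`, where the priority
`σ(i)` ranges over `{1,…,n}`. -/
noncomputable def pUtil (σ : Equiv.Perm (Fin n)) (f : Fin n → Finset I → ℕ)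
    (A : Fin n → Finset I) : Fin n → ℝ :=
  fun i => (f i (A i) : ℝ) + (((σ i : ℕ) : ℝ) + 1) / (n : ℝ) ^ 2

/-- A σ-Lorenz dominating allocation. -/
def SigmaLorenzDom (σ : Equiv.Perm (Fin n)) (f : Fin n → Finset I → ℕ)
    (A : Fin n → Finset I) : Prop :=
  ∀ B : Fin n → Finset I, IsAllocation B → LorenzGE (pUtil σ f A) (pUtil σ f B)

/-- Restriction of a valuation to a subset `D` of the items. -/
def restrictVal (f : Finset I → ℕ) (D : Finset I) : Finset I → ℕ := fun S => f (S ∩ D)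

/-- A partition of all the items into `n` (possibly empty) bundles. -/
def IsPartition (P : Fin n → Finset I) : Prop :=
  (∀ i j : Fin n, i ≠ j → Disjoint (P i) (P j)) ∧ ∀ a : I, ∃ j, a ∈ P j

/-- An XOS valuation: the pointwise maximum of a finite nonempty family of
nonnegative additive valuations. -/
def IsXOS (f : Finset I → ℝ) : Prop :=
  ∃ (k : ℕ) (w : Fin (k + 1) → I → ℝ),
    (∀ t a, 0 ≤ w t a) ∧
    ∀ S : Finset I, f S = Finset.univ.sup' Finset.univ_nonempty (fun t => ∑ a ∈ S, w t a)

/-- A dichotomous valuation (real-valued version). -/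
def IsDichotomousR (f : Finset I → ℝ) : Prop :=
  ∀ (S : Finset I) (a : I), f (insert a S) = f S ∨ f (insert a S) = f S + 1

/-- Envy-freeness up to one good. -/
def EF1 (f : Fin n → Finset I → ℝ) (A : Fin n → Finset I) : Prop :=
  ∀ i j : Fin n, f i (A j) ≤ f i (A i) ∨ ∃ e ∈ A j, f i ((A j).erase e) ≤ f i (A i)

/-- The maximum welfare attainable by a set `S` of agents. -/
noncomputable def maxWelfare (f : Fin n → Finset I → ℕ) (S : Finset (Fin n)) : ℕ :=
  Finset.sup (Finset.univ.filter fun B : Fin n → Finset I => IsAllocation B)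
    (fun B => ∑ j ∈ S, f j (B j))

/-- An allocation extended with index `none` for the set of unallocated items. -/
def extAlloc (A : Fin n → Finset I) : Option (Fin n) → Finset I
  | none => Finset.univ \ Finset.univ.biUnion A
  | some i => A i

/-!
For matroid rank valuations, the set of attainable utility vectors has an exchange property familiar
from integral polymatroids: if `u i < v i`, then `u` can be raised by one unit at `i`, at the cost
of at most one unit at a coordinate `j` with `v j < u j`. For two distinct vectors `u`, `v`, take a
coordinate `i` where they differ and where the smaller perturbed value is least, say with
`u i < v i`. The exchange at `i` is then an increment or a Pigou–Dalton transfer to a poorer agent,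
so `u` is not maximal for Lorenz domination of perturbed vectors. Hence there is only one maximal
vector, and, the set being finite, it dominates every other one. Lorenz domination is antisymmetric
here because perturbed integral vectors have no ties, and integrality lets the perturbation, of
total size at most `1`, be removed.
-/

section LorenzCurve

variable {α : Type*} [LinearOrder α]

theorem mem_sortedVec {u : Fin n → α} {a : α} : a ∈ sortedVec u ↔ ∃ i, u i = a := by
  simp [sortedVec]

theorem length_sortedVec (u : Fin n → α) : (sortedVec u).length = n := by
  simp [sortedVec]

theorem sortedVec_eq_ofFn (u : Fin n → α) : sortedVec u = List.ofFn (u ∘ Tuple.sort u) := by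
  refine List.Perm.eq_of_pairwise' (Multiset.pairwise_sort _ _)
    (Tuple.monotone_sort u).sortedLE_ofFn.pairwise ?_
  rw [← Multiset.coe_eq_coe, sortedVec, Multiset.sort_eq, Multiset.coe_eq_coe.2
    ((Tuple.sort u).ofFn_comp_perm u), Fin.univ_val_map]

/-- The Lorenz curve of `u`: its value at `k` is the sum of the `k` smallest entries. It turns
Lorenz domination into the pointwise order. -/
noncomputable def lorenzCurve [AddCommMonoid α] (u : Fin n → α) (k : ℕ) : α :=
  ((sortedVec u).take k).sum

variable [AddCommMonoid α]

theorem lorenzGE_iff_lorenzCurve_le {u v : Fin n → α} :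
    LorenzGE u v ↔ lorenzCurve v ≤ lorenzCurve u :=
  Iff.rfl

theorem lorenzCurve_eq_sum (u : Fin n → α) {k : ℕ} (hk : k ≤ n) :
    lorenzCurve u k = ∑ i : Fin k, u (Tuple.sort u (i.castLE hk)) := by
  rw [lorenzCurve, sortedVec_eq_ofFn, ← Fin.ofFn_take_eq_take_ofFn hk, List.sum_ofFn]
  rfl

theorem lorenzCurve_min (u : Fin n → α) (k : ℕ) : lorenzCurve u (min k n) = lorenzCurve u k := by
  rw [lorenzCurve, ← List.take_take, List.take_of_length_le (length_sortedVec u).le, lorenzCurve]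

theorem sortedVec_eq_of_lorenzCurve_eq [IsLeftCancelAdd α] {u v : Fin n → α}
    (h : lorenzCurve u = lorenzCurve v) : sortedVec u = sortedVec v := by
  refine List.ext_getElem (by simp only [length_sortedVec]) fun k hu hv => ?_
  have hsucc : lorenzCurve u k + (sortedVec u)[k] = lorenzCurve u k + (sortedVec v)[k] := by
    nth_rw 2 [h]
    simpa only [lorenzCurve, List.sum_take_succ _ _ hu, List.sum_take_succ _ _ hv]
      using congrFun h (k + 1)
  exact add_left_cancel hsucc

theorem LorenzGE.sortedVec_eq [IsLeftCancelAdd α] {u v : Fin n → α} (huv : LorenzGE u v)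
    (hvu : LorenzGE v u) : sortedVec u = sortedVec v := by
  rw [lorenzGE_iff_lorenzCurve_le] at huv hvu
  exact sortedVec_eq_of_lorenzCurve_eq (hvu.antisymm huv)

theorem exists_sum_eq_lorenzCurve (u : Fin n → α) {k : ℕ} (hk : k ≤ n) :
    ∃ S : Finset (Fin n), #S = k ∧ ∑ i ∈ S, u i = lorenzCurve u k := by
  refine ⟨univ.map ((Fin.castLEEmb hk).trans (Tuple.sort u).toEmbedding), by simp, ?_⟩
  rw [sum_map, lorenzCurve_eq_sum u hk]
  rfl

theorem val_le_val_apply_of_strictMono {m k : ℕ} {e : Fin m → Fin k} (he : StrictMono e)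
    (i : Fin m) : (i : ℕ) ≤ e i := by
  simpa using card_le_card_of_injOn e (s := Iio i) (t := Iio (e i))
    (fun j hj => mem_Iio.2 (he (mem_Iio.1 hj))) he.injective.injOn

theorem lorenzCurve_card_le_sum [IsOrderedAddMonoid α] (u : Fin n → α) (S : Finset (Fin n)) :
    lorenzCurve u #S ≤ ∑ i ∈ S, u i := by
  set T := S.map (Tuple.sort u).symm.toEmbedding with hT
  have hcard : #T = #S := card_map _
  let e := T.orderEmbOfFin hcard
  have he (k : Fin #S) : k.castLE (card_finset_fin_le S) ≤ e k :=
    val_le_val_apply_of_strictMono e.strictMono k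
  calc lorenzCurve u #S
      = ∑ k : Fin #S, u (Tuple.sort u (k.castLE (card_finset_fin_le S))) :=
        lorenzCurve_eq_sum u _
    _ ≤ ∑ k : Fin #S, u (Tuple.sort u (e k)) :=
        sum_le_sum fun k _ => Tuple.monotone_sort u (he k)
    _ = ∑ j ∈ T, u (Tuple.sort u j) := by
        rw [← T.map_orderEmbOfFin_univ hcard, sum_map]; rfl
    _ = ∑ i ∈ S, u i := by simp [hT]

theorem lorenzGE_iff_forall_exists_sum_le [IsOrderedAddMonoid α] {u v : Fin n → α} :
    LorenzGE u v ↔ ∀ S : Finset (Fin n), ∃ T : Finset (Fin n),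
      #T = #S ∧ ∑ i ∈ T, v i ≤ ∑ i ∈ S, u i := by
  constructor
  · intro h S
    obtain ⟨T, hT, hTv⟩ := exists_sum_eq_lorenzCurve v (card_finset_fin_le S)
    exact ⟨T, hT, hTv.trans_le ((h #S).trans (lorenzCurve_card_le_sum u S))⟩
  · intro h k
    obtain ⟨S, hS, hSu⟩ := exists_sum_eq_lorenzCurve u (min_le_right k n)
    obtain ⟨T, hT, hTS⟩ := h S
    calc lorenzCurve v k = lorenzCurve v #T := by rw [hT, hS, lorenzCurve_min]
      _ ≤ ∑ i ∈ T, v i := lorenzCurve_card_le_sum v T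
      _ ≤ ∑ i ∈ S, u i := hTS
      _ = lorenzCurve u k := by rw [hSu, lorenzCurve_min]

theorem LorenzGE.of_le [IsOrderedAddMonoid α] {u v : Fin n → α} (h : v ≤ u) : LorenzGE u v :=
  lorenzGE_iff_forall_exists_sum_le.2 fun S => ⟨S, rfl, sum_le_sum fun i _ => h i⟩

end LorenzCurve

theorem lorenzGE_pigouDalton_transfer {α : Type*} [LinearOrder α] [AddCommGroup α]
    [IsOrderedAddMonoid α] {x : Fin n → α} {c : α} {i j : Fin n} (hc : 0 ≤ c)
    (hij : x i + c ≤ x j) : LorenzGE (x + Pi.single i c - Pi.single j c) x := by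
  refine lorenzGE_iff_forall_exists_sum_le.2 fun S => ?_
  have hsum : ∑ k ∈ S, (x + Pi.single i c - Pi.single j c : Fin n → α) k =
      ∑ k ∈ S, x k + (if i ∈ S then c else 0) - (if j ∈ S then c else 0) := by
    simp only [Pi.sub_apply, Pi.add_apply, sum_sub_distrib, sum_add_distrib, sum_pi_single']
  rw [hsum]
  by_cases hS : j ∈ S ∧ i ∉ S
  · obtain ⟨hj, hi⟩ := hS
    have hi' : i ∉ S.erase j := fun h => hi (mem_of_mem_erase h)
    refine ⟨insert i (S.erase j), ?_, ?_⟩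
    · rw [card_insert_of_notMem hi', card_erase_add_one hj]
    · rw [sum_insert hi', if_neg hi, if_pos hj, add_zero, sum_erase_eq_sub hj]
      calc x i + (∑ k ∈ S, x k - x j) = ∑ k ∈ S, x k - (x j - x i) := by abel
        _ ≤ ∑ k ∈ S, x k - c := sub_le_sub_left (le_sub_iff_add_le'.2 hij) _
  · refine ⟨S, rfl, ?_⟩
    split_ifs <;> simp_all

section Perturbation

/-- The real vector obtained from the integral vector `u` by adding the perturbation `p`. -/
def perturb (p : Fin n → ℝ) (u : Fin n → ℕ) : Fin n → ℝ :=
  fun i => u i + p i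

/-- A perturbation is generic if it rules out ties between distinct coordinates of perturbed
integral vectors. -/
def IsGeneric (p : Fin n → ℝ) : Prop :=
  ∀ i j : Fin n, ∀ a b : ℕ, a + p i = b + p j → i = j

variable {p : Fin n → ℝ} {u v w : Fin n → ℕ} {i j : Fin n}

theorem isGeneric_of_injective (hinj : p.Injective) (hp : ∀ i, p i ∈ Set.Ioc 0 1) :
    IsGeneric p := by
  intro i j a b h
  obtain ⟨hi₀, hi₁⟩ := hp i
  obtain ⟨hj₀, hj₁⟩ := hp j
  have hab : (a : ℝ) < (b + 1 : ℕ) := by push_cast; linarith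
  have hba : (b : ℝ) < (a + 1 : ℕ) := by push_cast; linarith
  rw [Nat.cast_lt] at hab hba
  obtain rfl : a = b := by omega
  exact hinj (add_left_cancel h)

theorem IsGeneric.eq_of_lorenzGE (hp : IsGeneric p)
    (huv : LorenzGE (perturb p u) (perturb p v)) (hvu : LorenzGE (perturb p v) (perturb p u)) :
    u = v := by
  ext i
  have hi : perturb p u i ∈ sortedVec (perturb p v) :=
    huv.sortedVec_eq hvu ▸ mem_sortedVec.2 ⟨i, rfl⟩
  obtain ⟨j, hj⟩ := mem_sortedVec.1 hi
  obtain rfl := hp _ _ _ _ hj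
  exact_mod_cast (add_right_cancel hj).symm

theorem perturb_mono (h : u ≤ v) : perturb p u ≤ perturb p v :=
  fun i => by simpa [perturb] using h i

theorem perturb_transfer (hw : w + Pi.single j 1 = u + Pi.single i 1) :
    perturb p w = perturb p u + Pi.single i 1 - Pi.single j 1 := by
  ext k
  have hk := congrFun hw k
  simp only [Pi.add_apply, Pi.single_apply] at hk
  have hk' : (w k : ℝ) + (if k = j then 1 else 0) = u k + if k = i then 1 else 0 := by
    exact_mod_cast hk
  simp only [perturb, Pi.add_apply, Pi.sub_apply, Pi.single_apply]
  linarith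

/-- Integrality absorbs the perturbation, which contributes at most `1` to the larger sum and
something positive to the smaller one. -/
theorem LorenzGE.of_perturb (hpos : ∀ i, 0 < p i) (hsum : ∑ i, p i ≤ 1)
    (h : LorenzGE (perturb p u) (perturb p v)) : LorenzGE u v := by
  refine lorenzGE_iff_forall_exists_sum_le.2 fun S => ?_
  obtain ⟨T, hTS, hT⟩ := lorenzGE_iff_forall_exists_sum_le.1 h S
  refine ⟨T, hTS, ?_⟩
  obtain rfl | hTne := T.eq_empty_or_nonempty
  · simp
  have hpT : 0 < ∑ i ∈ T, p i := sum_pos (fun i _ => hpos i) hTne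
  have hpS : ∑ i ∈ S, p i ≤ 1 :=
    (sum_le_univ_sum_of_nonneg fun i => (hpos i).le).trans hsum
  simp only [perturb, sum_add_distrib] at hT
  have hlt : ((∑ i ∈ T, v i : ℕ) : ℝ) < (∑ i ∈ S, u i + 1 : ℕ) := by
    push_cast
    linarith
  exact Nat.lt_succ_iff.1 (Nat.cast_lt.1 hlt)

end Perturbation

section Exchange

/-- A set `P` of vectors has the exchange property if a vector of `P` can be raised by one unit at
any coordinate where it is smaller than another vector of `P`, at the cost of lowering by one unit
at most one coordinate, where it is larger. The lowering is written on the left-hand side of an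
equation to avoid truncated subtraction. -/
def HasExchange (P : Set (Fin n → ℕ)) : Prop :=
  ∀ u ∈ P, ∀ v ∈ P, ∀ i, u i < v i → u + Pi.single i 1 ∈ P ∨
    ∃ j, v j < u j ∧ ∃ w ∈ P, w + Pi.single j 1 = u + Pi.single i 1

variable {p : Fin n → ℝ} {P : Set (Fin n → ℕ)} {u v : Fin n → ℕ}

/-- The vectors of `P` whose perturbations are not strictly Lorenz-dominated within `P`. -/
def IsLorenzMaximal (p : Fin n → ℝ) (P : Set (Fin n → ℕ)) (u : Fin n → ℕ) : Prop :=
  MaximalFor (· ∈ P) (fun w => lorenzCurve (perturb p w)) u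

theorem IsLorenzMaximal.eq_of_lorenzGE (hu : IsLorenzMaximal p P u) (hp : IsGeneric p)
    (hv : v ∈ P) (h : LorenzGE (perturb p v) (perturb p u)) : v = u :=
  hp.eq_of_lorenzGE h (hu.2 hv h)

theorem exists_isLorenzMaximal_lorenzGE (hP : P.Finite) (hu : u ∈ P) :
    ∃ v, IsLorenzMaximal p P v ∧ LorenzGE (perturb p v) (perturb p u) := by
  obtain ⟨v, ⟨hv, hvu⟩, hmax⟩ := Set.Finite.exists_maximalFor (fun w => lorenzCurve (perturb p w))
    {w ∈ P | lorenzCurve (perturb p u) ≤ lorenzCurve (perturb p w)} (hP.sep _) ⟨u, hu, le_rfl⟩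
  exact ⟨v, ⟨hv, fun w hw hvw => hmax ⟨hw, hvu.trans hvw⟩ hvw⟩, hvu⟩

/-- Raising `u` at `i` toward `v` would be an improvement: either it is a plain increment, or the
unit comes from a `j` with `perturb p u i ≤ perturb p v j ≤ perturb p u j - 1`. -/
theorem IsLorenzMaximal.le_of_forall_le (hP : HasExchange P) (hp : IsGeneric p)
    (hu : IsLorenzMaximal p P u) (hv : v ∈ P) {i : Fin n}
    (hmin : ∀ j, u j ≠ v j → perturb p u i ≤ perturb p v j) : v i ≤ u i := by
  by_contra! hi
  rcases hP u hu.1 v hv i hi with hinc | ⟨j, hj, w, hw, hwj⟩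
  · have heq := hu.eq_of_lorenzGE hp hinc (.of_le (perturb_mono (by simp)))
    simpa using congrFun heq i
  · have hgap : perturb p u i + 1 ≤ perturb p u j := by
      have hji : perturb p u i ≤ perturb p v j := hmin j hj.ne'
      have hj' : (v j : ℝ) + 1 ≤ u j := by exact_mod_cast hj
      simp only [perturb] at hji ⊢
      linarith
    have hdom : LorenzGE (perturb p w) (perturb p u) := by
      rw [perturb_transfer hwj]
      exact lorenzGE_pigouDalton_transfer zero_le_one hgap
    have heq := hu.eq_of_lorenzGE hp hw hdom
    rw [heq] at hwj
    have hji : j = i := by simpa [Pi.single_apply] using congrFun hwj j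
    exact hi.not_gt (hji ▸ hj)

theorem IsLorenzMaximal.unique (hP : HasExchange P) (hp : IsGeneric p)
    (hu : IsLorenzMaximal p P u) (hv : IsLorenzMaximal p P v) : u = v := by
  by_contra hne
  obtain ⟨i, hi, hmin⟩ := exists_min_image {i | u i ≠ v i}
    (fun i => min (perturb p u i) (perturb p v i))
    (filter_nonempty_iff.2 (by simpa using Function.ne_iff.1 hne))
  simp only [mem_filter_univ] at hi hmin
  wlog h : u i < v i generalizing u v
  · exact this hv hu (Ne.symm hne) hi.symm (by simpa only [ne_comm, min_comm] using hmin)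
      (by omega)
  refine h.not_ge (hu.le_of_forall_le hP hp hv.1 fun j hj => ?_)
  have hle : perturb p u i ≤ perturb p v i := by simpa [perturb] using h.le
  calc perturb p u i = min (perturb p u i) (perturb p v i) := (min_eq_left hle).symm
    _ ≤ min (perturb p u j) (perturb p v j) := hmin j hj
    _ ≤ perturb p v j := min_le_right _ _

theorem HasExchange.exists_forall_lorenzGE (hP : HasExchange P) (hfin : P.Finite)
    (hne : P.Nonempty) (hp : IsGeneric p) :
    ∃ v ∈ P, ∀ u ∈ P, LorenzGE (perturb p v) (perturb p u) := by
  obtain ⟨u₀, hu₀⟩ := hne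
  obtain ⟨v, hv, -⟩ := exists_isLorenzMaximal_lorenzGE (p := p) hfin hu₀
  refine ⟨v, hv.1, fun u hu => ?_⟩
  obtain ⟨w, hw, hwu⟩ := exists_isLorenzMaximal_lorenzGE (p := p) hfin hu
  rwa [hv.unique hP hp hw]

end Exchange

section Matroid

variable {M : Type*}

/-- Independence in the matroid with rank function `f`. For a profile of valuations, the
allocations into independent bundles are the non-redundant ones. -/
def IsIndep (f : Finset M → ℕ) (S : Finset M) : Prop := f S = #S

namespace IsMRF

variable [DecidableEq M] {f : Finset M → ℕ}

theorem le_insert (hf : IsMRF f) (S : Finset M) (a : M) : f S ≤ f (insert a S) := by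
  rcases hf.dichot S a with h | h <;> omega

theorem insert_le (hf : IsMRF f) (S : Finset M) (a : M) : f (insert a S) ≤ f S + 1 := by
  rcases hf.dichot S a with h | h <;> omega

theorem monotone (hf : IsMRF f) : Monotone f :=
  monotone_iff_forall_le_insert.2 fun S a _ => hf.le_insert S a

theorem le_card (hf : IsMRF f) (S : Finset M) : f S ≤ #S := by
  induction S using Finset.induction_on with
  | empty => exact hf.empty.le
  | insert a S ha ih =>
    rw [card_insert_of_notMem ha]
    exact (hf.insert_le S a).trans (Nat.succ_le_succ ih)

theorem isIndep_insert (hf : IsMRF f) {S : Finset M} (hS : IsIndep f S) {a : M}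
    (ha : f S < f (insert a S)) : IsIndep f (insert a S) := by
  refine (hf.le_card _).antisymm ((card_insert_le a S).trans ?_)
  rwa [← hS]

theorem isIndep_erase (hf : IsMRF f) {S : Finset M} (hS : IsIndep f S) (a : M) :
    IsIndep f (S.erase a) := by
  by_cases ha : a ∈ S
  · refine (hf.le_card _).antisymm (Nat.le_of_succ_le_succ ?_)
    calc #(S.erase a) + 1 = f S := by rw [card_erase_add_one ha, hS]
      _ = f (insert a (S.erase a)) := by rw [insert_erase ha]
      _ ≤ f (S.erase a) + 1 := hf.insert_le _ a
  · rwa [erase_eq_of_notMem ha]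

theorem exists_isIndep_subset (hf : IsMRF f) (S : Finset M) :
    ∃ T ⊆ S, IsIndep f T ∧ f T = f S := by
  induction S using Finset.induction_on with
  | empty => exact ⟨∅, subset_rfl, hf.empty, rfl⟩
  | insert a S _ ih =>
    obtain ⟨T, hTS, hT, hfT⟩ := ih
    rcases hf.dichot S a with hS | hS
    · exact ⟨T, hTS.trans (subset_insert a S), hT, hfT.trans hS.symm⟩
    · have hsub := hf.submod T S hTS a
      have hle := hf.insert_le T a
      exact ⟨insert a T, insert_subset_insert a hTS, hf.isIndep_insert hT (by omega), by omega⟩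

theorem union_eq_of_forall_insert_eq (hf : IsMRF f) {S T : Finset M}
    (h : ∀ a ∈ T, f (insert a S) = f S) : f (T ∪ S) = f S := by
  induction T using Finset.induction_on with
  | empty => rw [empty_union]
  | insert a T _ ih =>
    have hT : f (T ∪ S) = f S := ih fun b hb => h b (mem_insert_of_mem hb)
    have ha : f (insert a S) = f S := h a (mem_insert_self a T)
    have hsub := hf.submod S (T ∪ S) subset_union_right a
    have hle := hf.le_insert (T ∪ S) a
    rw [insert_union]
    omega

theorem exists_isIndep_insert (hf : IsMRF f) {S T : Finset M} (hS : IsIndep f S)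
    (h : f S < f T) : ∃ a ∈ T, a ∉ S ∧ IsIndep f (insert a S) := by
  obtain ⟨a, haT, ha⟩ : ∃ a ∈ T, f (insert a S) ≠ f S := by
    by_contra! hflat
    have hT : f T ≤ f (T ∪ S) := hf.monotone subset_union_left
    exact h.not_ge (hT.trans_eq (hf.union_eq_of_forall_insert_eq hflat))
  refine ⟨a, haT, fun haS => ha (by rw [insert_eq_of_mem haS]), hf.isIndep_insert hS ?_⟩
  exact (hf.le_insert S a).lt_of_ne' ha

end IsMRF

end Matroid

section Allocation

variable {M : Type*}

/-- The utility vectors of allocations. -/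
def attainable (f : Fin n → Finset M → ℕ) : Set (Fin n → ℕ) :=
  util f '' {A | IsAllocation A}

theorem util_mem_attainable {f : Fin n → Finset M → ℕ} {A : Fin n → Finset M}
    (hA : IsAllocation A) : util f A ∈ attainable f :=
  Set.mem_image_of_mem _ hA

theorem attainable_nonempty (f : Fin n → Finset M → ℕ) : (attainable f).Nonempty :=
  ⟨_, util_mem_attainable fun _ _ _ => disjoint_empty_left ∅⟩

theorem finite_attainable [Finite M] (f : Fin n → Finset M → ℕ) : (attainable f).Finite :=
  (Set.toFinite _).image _

/-- An allocation into independent bundles. -/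
structure IsIndepAllocation (f : Fin n → Finset M → ℕ) (A : Fin n → Finset M) : Prop where
  isAllocation : IsAllocation A
  isIndep : ∀ i, IsIndep (f i) (A i)

variable {f : Fin n → Finset M → ℕ} {A B : Fin n → Finset M} {i j : Fin n} {a : M}

theorem IsIndepAllocation.util_eq_card (hA : IsIndepAllocation f A) (k : Fin n) :
    util f A k = #(A k) :=
  hA.isIndep k

variable [DecidableEq M]

/-- The allocation in which agent `i` receives item `a` on top of her bundle in `A`, and the
owner of `a`, if any, loses it. -/
def reassign (A : Fin n → Finset M) (i : Fin n) (a : M) : Fin n → Finset M :=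
  fun k => if k = i then insert a (A k) else (A k).erase a

theorem mem_reassign {k : Fin n} {b : M} :
    b ∈ reassign A i a k ↔ b = a ∧ k = i ∨ b ≠ a ∧ b ∈ A k := by
  unfold reassign
  split_ifs <;> grind

theorem isAllocation_reassign (hA : IsAllocation A) (i : Fin n) (a : M) :
    IsAllocation (reassign A i a) := by
  intro k l hkl
  have hAkl := disjoint_left.1 (hA k l hkl)
  refine disjoint_left.2 fun b hbk hbl => ?_
  rw [mem_reassign] at hbk hbl
  grind

theorem card_reassign_add (haA : a ∉ A i) (k : Fin n) :
    #(reassign A i a k) + (if a ∈ A k then 1 else 0) = #(A k) + (Pi.single i 1 : Fin n → ℕ) k := by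
  by_cases hk : k = i
  · subst hk
    simp [reassign, haA]
  · by_cases ha : a ∈ A k
    · rw [reassign, if_neg hk, if_pos ha, Pi.single_eq_of_ne hk, card_erase_add_one ha, add_zero]
    · simp [reassign, hk, ha]

theorem exists_isIndepAllocation_of_mem_attainable (hf : ∀ i, IsMRF (f i)) {u : Fin n → ℕ}
    (hu : u ∈ attainable f) : ∃ A, IsIndepAllocation f A ∧ util f A = u := by
  obtain ⟨A, hA, rfl⟩ := hu
  choose B hBA hB hfB using fun i => (hf i).exists_isIndep_subset (A i)
  exact ⟨B, ⟨fun i j hij => (hA i j hij).mono (hBA i) (hBA j), hB⟩, funext hfB⟩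

theorem isIndepAllocation_reassign (hf : ∀ i, IsMRF (f i)) (hA : IsIndepAllocation f A)
    (ha : IsIndep (f i) (insert a (A i))) : IsIndepAllocation f (reassign A i a) := by
  refine ⟨isAllocation_reassign hA.isAllocation i a, fun k => ?_⟩
  by_cases hk : k = i
  · subst hk
    simpa only [reassign, if_true] using ha
  · simpa only [reassign, if_neg hk] using (hf k).isIndep_erase (hA.isIndep k) a

theorem IsIndepAllocation.util_reassign_of_forall_notMem (hA : IsIndepAllocation f A)
    (hC : IsIndepAllocation f (reassign A i a)) (ha : ∀ j, a ∉ A j) :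
    util f (reassign A i a) = util f A + Pi.single i 1 := by
  ext k
  rw [Pi.add_apply, hC.util_eq_card, hA.util_eq_card, ← card_reassign_add (ha i) k, if_neg (ha k),
    add_zero]

theorem IsIndepAllocation.util_reassign_of_mem (hA : IsIndepAllocation f A)
    (hC : IsIndepAllocation f (reassign A i a)) (hai : a ∉ A i) (haj : a ∈ A j) :
    util f (reassign A i a) + Pi.single j 1 = util f A + Pi.single i 1 := by
  have howner (k : Fin n) : (Pi.single j 1 : Fin n → ℕ) k = if a ∈ A k then 1 else 0 := by
    by_cases hk : k = j
    · subst hk; simp [haj]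
    · simp [hk, disjoint_left.1 (hA.isAllocation j k (Ne.symm hk)) haj]
  ext k
  rw [Pi.add_apply, Pi.add_apply, hC.util_eq_card, hA.util_eq_card, howner,
    card_reassign_add hai k]

theorem biUnion_sdiff_reassign_ssubset (hB : IsAllocation B) (haB : a ∈ B i) (haA : a ∉ A i) :
    univ.biUnion (fun k => B k \ reassign A i a k) ⊂ univ.biUnion (fun k => B k \ A k) := by
  have howner (k : Fin n) (hak : a ∈ B k) : k = i := by
    by_contra hk
    exact disjoint_left.1 (hB k i hk) hak haB
  have hsub : univ.biUnion (fun k => B k \ reassign A i a k) ⊆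
      univ.biUnion (fun k => B k \ A k) := by
    intro b
    simp only [mem_biUnion, mem_sdiff, mem_univ, true_and, mem_reassign]
    grind
  refine (ssubset_iff_of_subset hsub).2 ⟨a, ?_, ?_⟩ <;>
    simp only [mem_biUnion, mem_sdiff, mem_univ, true_and, mem_reassign] <;> grind

/-- If the owner of the item handed to `i` ends up with less than in `B`, she is compensated in
turn; each item handed over brings the allocation closer to `B`, so the chain stops. -/
theorem IsIndepAllocation.exists_exchange (hf : ∀ i, IsMRF (f i)) (hA : IsIndepAllocation f A)
    (hB : IsIndepAllocation f B) (hi : util f A i < util f B i) :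
    util f A + Pi.single i 1 ∈ attainable f ∨ ∃ j, util f B j < util f A j ∧
      ∃ w ∈ attainable f, w + Pi.single j 1 = util f A + Pi.single i 1 := by
  induction hD : univ.biUnion (fun k => B k \ A k) using Finset.strongInduction
    generalizing A i with
  | H D ih =>
  obtain ⟨a, haB, haA, ha⟩ := (hf i).exists_isIndep_insert (hA.isIndep i) hi
  have hC := isIndepAllocation_reassign hf hA ha
  by_cases howned : ∃ j, a ∈ A j
  · obtain ⟨j, haj⟩ := howned
    have hCj := hA.util_reassign_of_mem hC haA haj
    rcases lt_or_ge (util f B j) (util f A j) with hj | hj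
    · exact Or.inr ⟨j, hj, _, util_mem_attainable hC.isAllocation, hCj⟩
    · have hCjB : util f (reassign A i a) j < util f B j := by
        have := congrFun hCj j
        simp only [Pi.add_apply, Pi.single_apply] at this
        grind
      have hlt := biUnion_sdiff_reassign_ssubset hB.isAllocation haB haA
      rcases ih _ (hD ▸ hlt) hC hCjB rfl with h | ⟨l, hl, w, hw, hwl⟩
      · exact Or.inl (hCj ▸ h)
      · refine Or.inr ⟨l, ?_, w, hw, hwl.trans hCj⟩
        have := congrFun hCj l
        simp only [Pi.add_apply, Pi.single_apply] at this
        grind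
  · push Not at howned
    exact Or.inl (hA.util_reassign_of_forall_notMem hC howned ▸ util_mem_attainable hC.isAllocation)

theorem hasExchange_attainable (hf : ∀ i, IsMRF (f i)) : HasExchange (attainable f) := by
  intro u hu v hv i hi
  obtain ⟨A, hA, rfl⟩ := exists_isIndepAllocation_of_mem_attainable hf hu
  obtain ⟨B, hB, rfl⟩ := exists_isIndepAllocation_of_mem_attainable hf hv
  exact hA.exists_exchange hf hB hi

end Allocation

section Priority

/-- The perturbation `σ(i)/n²` given by a priority order; the `+ 1` is there because `Fin n` starts
at `0` whereas priorities start at `1`. -/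
noncomputable def priorityShift (σ : Equiv.Perm (Fin n)) (i : Fin n) : ℝ :=
  (((σ i : ℕ) : ℝ) + 1) / (n : ℝ) ^ 2

variable (σ : Equiv.Perm (Fin n))

theorem priorityShift_pos (i : Fin n) : 0 < priorityShift σ i := by
  have hn : (0 : ℝ) < n := Nat.cast_pos.2 i.pos
  unfold priorityShift
  positivity

theorem priorityShift_le (i : Fin n) : priorityShift σ i ≤ (n : ℝ)⁻¹ := by
  have hn : (0 : ℝ) < n := Nat.cast_pos.2 i.pos
  have hσ : ((σ i : ℕ) : ℝ) + 1 ≤ n := by exact_mod_cast (σ i).isLt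
  calc priorityShift σ i ≤ n / (n : ℝ) ^ 2 := div_le_div_of_nonneg_right hσ (by positivity)
    _ = (n : ℝ)⁻¹ := by field_simp

theorem sum_priorityShift_le_one : ∑ i, priorityShift σ i ≤ 1 :=
  calc ∑ i, priorityShift σ i ≤ ∑ _i : Fin n, (n : ℝ)⁻¹ :=
        sum_le_sum fun i _ => priorityShift_le σ i
    _ = n * (n : ℝ)⁻¹ := by simp
    _ ≤ 1 := mul_inv_le_one

theorem priorityShift_injective : (priorityShift σ).Injective := by
  intro i j h
  have hn : (n : ℝ) ^ 2 ≠ 0 := pow_ne_zero 2 (Nat.cast_ne_zero.2 i.pos.ne')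
  rw [priorityShift, priorityShift, div_left_inj' hn, add_left_inj, Nat.cast_inj] at h
  exact σ.injective (Fin.ext h)

theorem isGeneric_priorityShift : IsGeneric (priorityShift σ) :=
  isGeneric_of_injective (priorityShift_injective σ) fun i =>
    ⟨priorityShift_pos σ i, (priorityShift_le σ i).trans (Nat.cast_inv_le_one n)⟩

theorem sigmaLorenzDom_iff {M : Type*} {f : Fin n → Finset M → ℕ} {A : Fin n → Finset M} :
    SigmaLorenzDom σ f A ↔ ∀ u ∈ attainable f,
      LorenzGE (perturb (priorityShift σ) (util f A)) (perturb (priorityShift σ) u) :=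
  ⟨fun h => by rintro _ ⟨B, hB, rfl⟩; exact h B hB, fun h B hB => h _ (util_mem_attainable hB)⟩

end Priority

/-- Existence and uniqueness of σ-Lorenz dominating allocations for MRF valuations,
and the fact that they are Lorenz dominating with respect to the unperturbed valuations. -/
theorem sigma_lorenz_dominating_exists_unique
    {n : ℕ} {I : Type*} [DecidableEq I] [Fintype I]
    (σ : Equiv.Perm (Fin n))
    (f : Fin n → Finset I → ℕ) (hf : ∀ i, IsMRF (f i)) :
    -- (i) a σ-Lorenz dominating allocation exists
    (∃ A : Fin n → Finset I, IsAllocation A ∧ SigmaLorenzDom σ f A) ∧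
    -- (ii) the utility vector of σ-Lorenz dominating allocations is unique
    (∀ A A' : Fin n → Finset I, IsAllocation A → SigmaLorenzDom σ f A →
      IsAllocation A' → SigmaLorenzDom σ f A' →
      ∀ i : Fin n, f i (A i) = f i (A' i)) ∧
    -- (iii) every σ-Lorenz dominating allocation is Lorenz dominating for `f`
    (∀ A : Fin n → Finset I, IsAllocation A → SigmaLorenzDom σ f A →
      LorenzDominating f A) := by
  have hgen := isGeneric_priorityShift σ
  simp only [sigmaLorenzDom_iff]
  refine ⟨?_, fun A A' hA hdomA hA' hdomA' => ?_, fun A _ hdomA B hB => ?_⟩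
  · obtain ⟨_, ⟨A, hA, rfl⟩, hdom⟩ := (hasExchange_attainable hf).exists_forall_lorenzGE
      (finite_attainable f) (attainable_nonempty f) hgen
    exact ⟨A, hA, hdom⟩
  · exact congrFun <| hgen.eq_of_lorenzGE (hdomA _ (util_mem_attainable hA'))
      (hdomA' _ (util_mem_attainable hA))
  · exact .of_perturb (priorityShift_pos σ) (sum_priorityShift_le_one σ)
      (hdomA _ (util_mem_attainable hB))
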